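/- Let G be a finite simple graph that is gap-free and cricket-free, with nonzero 4-path ideal I_4(G). Then I_4(G) has a linear minimal free resolution, i.e., reg(I_4(G)) = 4. -/

import Mathlib

open MvPolynomial

/-! Graph-theoretic definitions -/

/-- A list of vertices is a path in `G`: consecutive vertices are adjacent and all
vertices are distinct. -/
def SimpleGraph.IsPathList {V : Type*} (G : SimpleGraph V) (l : List V) : Prop :=
  l.Chain' G.Adj ∧ l.Nodup

/-- The `t`-path ideal of a graph: the ideal generated by the monomials
`x_{v_1} ⋯ x_{v_t}` where `v_1 ⋯ v_t` is a path on `t` distinct vertices of `G`. -/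
noncomputable def pathIdeal {V K : Type*} [CommRing K] (G : SimpleGraph V) (t : ℕ) :
    Ideal (MvPolynomial V K) :=
  Ideal.span { p | ∃ l : List V, G.IsPathList l ∧ l.length = t ∧ p = (l.map X).prod }

/-- The edge ideal of a graph. -/
noncomputable def edgeIdeal {V K : Type*} [CommRing K] (G : SimpleGraph V) :
    Ideal (MvPolynomial V K) :=
  Ideal.span { p | ∃ u v, G.Adj u v ∧ p = X u * X v }

/-- `G` is gap-free: any two vertex-disjoint edges are joined by an edge. -/
def SimpleGraph.GapFree {V : Type*} (G : SimpleGraph V) : Prop :=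
  ∀ a b c d : V, G.Adj a b → G.Adj c d → a ≠ c → a ≠ d → b ≠ c → b ≠ d →
    (G.Adj a c ∨ G.Adj a d ∨ G.Adj b c ∨ G.Adj b d)

/-- `G` is claw-free: it has no induced `K_{1,3}`. -/
def SimpleGraph.ClawFree {V : Type*} (G : SimpleGraph V) : Prop :=
  ∀ v a b c : V, G.Adj v a → G.Adj v b → G.Adj v c → a ≠ b → a ≠ c → b ≠ c →
    (G.Adj a b ∨ G.Adj a c ∨ G.Adj b c)

/-- `G` is cricket-free: it has no induced cricket. -/
def SimpleGraph.CricketFree {V : Type*} (G : SimpleGraph V) : Prop :=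
  ¬ ∃ w1 w2 w3 w4 w5 : V,
      w1 ≠ w2 ∧ w1 ≠ w3 ∧ w1 ≠ w4 ∧ w1 ≠ w5 ∧ w2 ≠ w3 ∧ w2 ≠ w4 ∧ w2 ≠ w5 ∧
      w3 ≠ w4 ∧ w3 ≠ w5 ∧ w4 ≠ w5 ∧
      G.Adj w1 w3 ∧ G.Adj w2 w3 ∧ G.Adj w3 w4 ∧ G.Adj w3 w5 ∧ G.Adj w4 w5 ∧
      ¬ G.Adj w1 w2 ∧ ¬ G.Adj w1 w4 ∧ ¬ G.Adj w1 w5 ∧ ¬ G.Adj w2 w4 ∧ ¬ G.Adj w2 w5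

/-- `w : Fin n → V` is an induced cycle of length `n` in `H`. -/
def SimpleGraph.IsInducedCycle {V : Type*} (H : SimpleGraph V) {n : ℕ} (w : Fin n → V) :
    Prop :=
  3 ≤ n ∧ Function.Injective w ∧
    ∀ i j : Fin n, H.Adj (w i) (w j) ↔
      ((j : ℕ) = ((i : ℕ) + 1) % n ∨ (i : ℕ) = ((j : ℕ) + 1) % n)

/-- A graph is chordal if it has no induced cycle of length at least four. -/
def SimpleGraph.Chordal {V : Type*} (H : SimpleGraph V) : Prop :=
  ∀ (n : ℕ), 4 ≤ n → ∀ w : Fin n → V, ¬ H.IsInducedCycle w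

/-! Monomial ideals, graded Betti numbers via the Taylor complex, and
Castelnuovo–Mumford regularity. -/

/-- The monomial ideal generated by the monomials with exponent vectors `gens`. -/
noncomputable def monomialSpan {V K : Type*} [CommRing K] {k : ℕ}
    (gens : Fin k → (V →₀ ℕ)) : Ideal (MvPolynomial V K) :=
  Ideal.span (Set.range fun i => monomial (gens i) (1 : K))

/-- The total degree of an exponent vector. -/
def monomialDegree {V : Type*} (m : V →₀ ℕ) : ℕ := m.sum fun _ n => n

/-- `m` is a minimal monomial generator of the monomial ideal `I`. -/
def IsMinimalMonomialGen {V K : Type*} [CommRing K] (I : Ideal (MvPolynomial V K))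
    (m : V →₀ ℕ) : Prop :=
  monomial m (1 : K) ∈ I ∧ ∀ m' : V →₀ ℕ, m' ≤ m → m' ≠ m → monomial m' (1 : K) ∉ I

/-- The lcm of the monomials `gens i`, `i ∈ T`. -/
noncomputable def taylorLcm {V : Type*} {k : ℕ} (gens : Fin k → (V →₀ ℕ))
    (T : Finset (Fin k)) : V →₀ ℕ :=
  T.sup gens

open Classical in
/-- The boundary of a basis element of the Taylor complex of `gens`, tensored with the
residue field `K`: only the terms where the lcm is unchanged survive. -/
noncomputable def taylorBoundary {V K : Type*} [Field K] {k : ℕ}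
    (gens : Fin k → (V →₀ ℕ)) (T : Finset (Fin k)) : Finset (Fin k) →₀ K :=
  ∑ t ∈ T, if taylorLcm gens (T.erase t) = taylorLcm gens T then
      ((-1 : K) ^ (T.filter fun s => s < t).card) • Finsupp.single (T.erase t) (1 : K)
    else 0

/-- The differential of the Taylor complex of `gens` tensored with `K`. -/
noncomputable def taylorDiff {V K : Type*} [Field K] {k : ℕ}
    (gens : Fin k → (V →₀ ℕ)) : (Finset (Fin k) →₀ K) →ₗ[K] (Finset (Fin k) →₀ K) :=
  Finsupp.lsum K fun T =>
    LinearMap.toSpanSingleton K (Finset (Fin k) →₀ K) (taylorBoundary gens T)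

/-- The graded piece of the Taylor complex in homological degree `i` and internal
degree `j`. -/
noncomputable def taylorPiece {V K : Type*} [Field K] {k : ℕ}
    (gens : Fin k → (V →₀ ℕ)) (i j : ℕ) : Submodule K (Finset (Fin k) →₀ K) :=
  Submodule.span K { f | ∃ T : Finset (Fin k), T.card = i ∧
    monomialDegree (taylorLcm gens T) = j ∧ f = Finsupp.single T (1 : K) }

/-- Nonvanishing of the degree-`j` part of the `i`-th homology of the Taylor complex
of `gens` tensored with `K`; since the Taylor complex is a graded free resolution of
`S/I` (where `I` is the ideal generated by the monomials `gens`), this says exactly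
that `Tor_i^S(S/I, K)_j ≠ 0`. -/
noncomputable def taylorHomologyNonzero {V K : Type*} [Field K] {k : ℕ}
    (gens : Fin k → (V →₀ ℕ)) (i j : ℕ) : Prop :=
  ¬ (LinearMap.ker (taylorDiff (K := K) gens) ⊓ taylorPiece (K := K) gens i j ≤
      Submodule.map (taylorDiff (K := K) gens) (taylorPiece (K := K) gens (i + 1) j))

/-- For a monomial ideal `I`, `Tor_i^S(I, K)_j ≠ 0`.  (Since
`Tor_i^S(I,K) ≅ Tor_{i+1}^S(S/I,K)`, this is computed from the Taylor complex on any
family of monomial generators of `I`.) -/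
def IdealTorNonzero {V K : Type*} [Field K] (I : Ideal (MvPolynomial V K))
    (i j : ℕ) : Prop :=
  ∃ (k : ℕ) (gens : Fin k → (V →₀ ℕ)), I = monomialSpan gens ∧
    taylorHomologyNonzero (K := K) gens (i + 1) j

/-- The Castelnuovo–Mumford regularity of a monomial ideal `I`:
`reg I = max { j - i : Tor_i^S(I, K)_j ≠ 0 }`. -/
noncomputable def reg {V K : Type*} [Field K] (I : Ideal (MvPolynomial V K)) : ℕ :=
  sSup { d | ∃ i j : ℕ, IdealTorNonzero I i j ∧ d = j - i }

/-!
Write `I : b` for the colon of a monomial ideal by a monomial `b`. The Taylor complex of `I : b` can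
be formed from the generators of `I` themselves, by including `b` in every lcm. In this form the
complex of `I + (u)` over `b` is the mapping cone of the comparison map from the complex of `I` over
`lcm(b, u)` to the one over `b`, so bounds on the regularity of `(I + (u)) : b` and `I : b` follow
from one another once the regularity of `I : lcm(b, u)` is bounded.

Let `G` be gap-free and cricket-free. By gap-freeness `I_4(G)` is generated by the products of two
disjoint edges. Remove the edges of `G` one at a time from `I_4(G) + I(G) = I(G)`, whose regularity
is at most 3 by the argument below, applied to colons by variables. At each step the colon by the
removed edge `ab` is generated by variables and the edge ideal of a graph on the other vertices, and
it is enough that this edge ideal has a linear resolution. It does, because every nonempty set `W`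
of vertices contains one that is adjacent, in this graph, to an end of each edge inside `W`: among
the vertices of `W` adjacent to `a` but not to `b`, take one with the most neighbours outside
`N(a) ∪ N(b)`. It is adjacent in the colon graph to all of `N(b)`; of the edges that avoid `N(b)`,
those inside `N(a)` are met because `G` has no cricket, the others because it has no gap. Hence
`reg I_4(G) ≤ 4`, and the generators have degree 4.
-/

namespace ColonTaylor

open Finsupp

section Single

variable {K α β N : Type*} [Field K] [AddCommGroup N] [Module K N]

theorem linearMap_ext_single {F F' : (α →₀ K) →ₗ[K] N}
    (h : ∀ T, F (single T 1) = F' (single T 1)) : F = F' :=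
  lhom_ext' fun T => LinearMap.ext_ring (h T)

theorem map_mem_supported (F : (α →₀ K) →ₗ[K] (β →₀ K)) {s : Set α} {t : Set β}
    (h : ∀ T ∈ s, F (single T 1) ∈ supported K K t) {z : α →₀ K} (hz : z ∈ supported K K s) :
    F z ∈ supported K K t := by
  have hle : (supported K K s).map F ≤ supported K K t := by
    rw [supported_eq_span_single, Submodule.map_span_le]
    rintro _ ⟨T, hT, rfl⟩
    exact h T hT
  exact hle (Submodule.mem_map_of_mem hz)

end Single

section ColonLcm

variable {ι M K : Type*} [SemilatticeSup M] [OrderBot M] [Field K]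

/-- The lcm of a base monomial `b` and the generators `g t`, `t ∈ T`. It is the multidegree of the
basis element `T` of the Taylor complex on the family `lcm(b, g t) / b`, which resolves
`S / (I : b)`, when the complex is shifted so that degrees count the factor `b`. -/
def colonLcm (g : ι → M) (b : M) (T : Finset ι) : M := b ⊔ T.sup g

theorem colonLcm_mono_left (g : ι → M) {b b' : M} (h : b ≤ b') (T : Finset ι) :
    colonLcm g b T ≤ colonLcm g b' T :=
  sup_le_sup_right h _

theorem colonLcm_mono_right (g : ι → M) (b : M) {T T' : Finset ι} (h : T ⊆ T') :
    colonLcm g b T ≤ colonLcm g b T' :=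
  sup_le_sup_left (Finset.sup_mono h) _

theorem colonLcm_insert [DecidableEq ι] (g : ι → M) (b : M) (u : ι) (T : Finset ι) :
    colonLcm g b (insert u T) = colonLcm g (b ⊔ g u) T := by
  simp only [colonLcm, Finset.sup_insert, sup_assoc]

theorem colonLcm_erase [DecidableEq ι] (g : ι → M) (b : M) {u : ι} {T : Finset ι} (hu : u ∈ T) :
    colonLcm g (b ⊔ g u) (T.erase u) = colonLcm g b T := by
  rw [← colonLcm_insert, Finset.insert_erase hu]

theorem colonLcm_sup_of_mem (g : ι → M) (b : M) {u : ι} {T : Finset ι} (hu : u ∈ T) :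
    colonLcm g (b ⊔ g u) T = colonLcm g b T := by
  rw [colonLcm, colonLcm, sup_assoc, sup_eq_right.2 (Finset.le_sup hu)]

open Classical in
/-- The comparison of the complexes over `b'` and over `b ≤ b'`, tensored with `K`: a basis element
survives exactly when its multidegree is the same on both sides. -/
noncomputable def changeBase (g : ι → M) (b b' : M) : (Finset ι →₀ K) →ₗ[K] (Finset ι →₀ K) :=
  linearCombination K fun T => if colonLcm g b T = colonLcm g b' T then single T 1 else 0

open Classical in
theorem changeBase_single (g : ι → M) (b b' : M) (T : Finset ι) (a : K) :
    changeBase g b b' (single T a) =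
      if colonLcm g b T = colonLcm g b' T then single T a else 0 := by
  simp [changeBase]

theorem changeBase_self (g : ι → M) (b : M) (z : Finset ι →₀ K) : changeBase g b b z = z := by
  have : changeBase (K := K) g b b = LinearMap.id := linearMap_ext_single fun T => by
    rw [changeBase_single, if_pos rfl, LinearMap.id_apply]
  rw [this, LinearMap.id_apply]

/-- The chains of homological degree `i` and internal degree `j` on basis elements contained in
`A`, where internal degrees count the base monomial `b`. -/
noncomputable def piece (K : Type*) [Field K] (g : ι → M) (deg : M → ℕ) (A : Set ι) (b : M)
    (i : ℤ) (j : ℕ) : Submodule K (Finset ι →₀ K) :=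
  supported K K {T | ↑T ⊆ A ∧ (T.card : ℤ) = i ∧ deg (colonLcm g b T) = j}

variable {g : ι → M} {deg : M → ℕ} {A B : Set ι} {b b' : M} {i : ℤ} {j : ℕ}

theorem piece_mono (h : A ⊆ B) : piece K g deg A b i j ≤ piece K g deg B b i j :=
  supported_mono fun _ hT => ⟨hT.1.trans h, hT.2⟩

theorem changeBase_mem_piece {z : Finset ι →₀ K}
    (hz : z ∈ piece K g deg A b' i j) :
    changeBase g b b' z ∈ piece K g deg A b i j := by
  refine map_mem_supported _ (fun T hT => ?_) hz
  rw [changeBase_single]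
  split_ifs with h
  · exact single_mem_supported _ _ ⟨hT.1, hT.2.1, h ▸ hT.2.2⟩
  · exact zero_mem _

end ColonLcm

section Complex

variable {ι M K : Type*} [LinearOrder ι] [SemilatticeSup M] [OrderBot M] [Field K]

/-- The sign with which the face `T.erase u` occurs in the boundary of `T`. -/
def faceSign (K : Type*) [Field K] (u : ι) (T : Finset ι) : K := (-1) ^ (T.filter (· < u)).card

theorem faceSign_mul_self (u : ι) (T : Finset ι) : faceSign K u T * faceSign K u T = 1 := by
  simp [faceSign, ← pow_add, ← two_mul]

theorem faceSign_insert_self (u : ι) (T : Finset ι) :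
    faceSign K u (insert u T) = faceSign K u T := by
  simp [faceSign, Finset.filter_insert]

theorem faceSign_erase_self (u : ι) (T : Finset ι) :
    faceSign K u (T.erase u) = faceSign K u T := by
  simp [faceSign, Finset.filter_erase]

theorem faceSign_mul_faceSign_insert {u t : ι} {T : Finset ι} (hu : u ∉ T) (ht : t ∈ T) :
    faceSign K u T * faceSign K t (insert u T) = -(faceSign K t T * faceSign K u (T.erase t)) := by
  unfold faceSign
  rw [Finset.filter_insert, Finset.filter_erase]
  rcases lt_or_gt_of_ne (ne_of_mem_of_not_mem ht hu) with h | h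
  · rw [if_neg h.not_gt, ← Finset.card_erase_add_one (Finset.mem_filter.2 ⟨ht, h⟩)]
    ring
  · rw [if_pos h, Finset.card_insert_of_notMem (by simp [hu]),
      Finset.erase_eq_of_notMem (by simp [h.le])]
    ring

theorem faceSign_insert_mul_faceSign {u t : ι} {T : Finset ι} (hu : u ∉ T) (ht : t ∈ T) :
    faceSign K t (insert u T) * faceSign K u (T.erase t) = -(faceSign K u T * faceSign K t T) := by
  linear_combination (faceSign K u T * faceSign K u (T.erase t)) *
      faceSign_mul_faceSign_insert (K := K) hu ht
    - faceSign K t (insert u T) * faceSign K u (T.erase t) * faceSign_mul_self (K := K) u T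
    - faceSign K u T * faceSign K t T * faceSign_mul_self (K := K) u (T.erase t)

open Classical in
/-- The differential, tensored with `K`, of the Taylor complex resolving `S / (I : b)`, where `I`
is generated by the family `g`. The case `b = ⊥` is the usual Taylor complex. -/
noncomputable def boundary (g : ι → M) (b : M) : (Finset ι →₀ K) →ₗ[K] (Finset ι →₀ K) :=
  linearCombination K fun T => ∑ t ∈ T,
    if colonLcm g b (T.erase t) = colonLcm g b T then single (T.erase t) (faceSign K t T) else 0

/-- Adds the index `u` to every basis element avoiding it: the operator exhibiting the complex of
`insert u A` over `b` as a mapping cone of the complexes of `A` over `b ⊔ g u` and over `b`. -/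
noncomputable def cone (u : ι) : (Finset ι →₀ K) →ₗ[K] (Finset ι →₀ K) :=
  linearCombination K fun T => if u ∈ T then 0 else single (insert u T) (faceSign K u T)

/-- Removes the index `u` from every basis element containing it and kills the others: the
projection of the mapping cone onto its shifted summand. -/
noncomputable def uncone (u : ι) : (Finset ι →₀ K) →ₗ[K] (Finset ι →₀ K) :=
  linearCombination K fun T => if u ∈ T then single (T.erase u) (faceSign K u T) else 0

open Classical in
theorem boundary_single (g : ι → M) (b : M) (T : Finset ι) (a : K) :
    boundary g b (single T a) = ∑ t ∈ T, if colonLcm g b (T.erase t) = colonLcm g b T then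
      single (T.erase t) (a * faceSign K t T) else 0 := by
  simp [boundary, Finset.smul_sum]

theorem cone_single (u : ι) (T : Finset ι) (a : K) :
    cone u (single T a) = if u ∈ T then 0 else single (insert u T) (a * faceSign K u T) := by
  simp [cone]

theorem uncone_single (u : ι) (T : Finset ι) (a : K) :
    uncone u (single T a) = if u ∈ T then single (T.erase u) (a * faceSign K u T) else 0 := by
  simp [uncone]

theorem boundary_cone (g : ι → M) (b : M) (u : ι) (z : Finset ι →₀ K) :
    boundary g b (cone u z) = changeBase g b (b ⊔ g u) z - cone u (boundary g (b ⊔ g u) z) := by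
  classical
  refine LinearMap.congr_fun (f := boundary g b ∘ₗ cone u)
    (g := changeBase g b (b ⊔ g u) - cone u ∘ₗ boundary g (b ⊔ g u))
    (linearMap_ext_single fun T => ?_) z
  simp only [LinearMap.comp_apply, LinearMap.sub_apply, cone_single, changeBase_single,
    boundary_single, one_mul, map_sum, apply_ite (cone u), map_zero]
  by_cases hu : u ∈ T
  · have hfaces : ∀ t ∈ T, t ≠ u → u ∈ T.erase t := fun t _ htu =>
      Finset.mem_erase_of_ne_of_mem htu.symm hu
    rw [if_pos hu, map_zero, if_pos (colonLcm_sup_of_mem g b hu).symm,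
      Finset.sum_eq_single_of_mem u hu fun t ht htu => by rw [if_pos (hfaces t ht htu), ite_self],
      colonLcm_erase g b hu, if_pos (colonLcm_sup_of_mem g b hu).symm,
      if_neg (Finset.notMem_erase u T), Finset.insert_erase hu, faceSign_erase_self,
      faceSign_mul_self, sub_self]
  · rw [if_neg hu, boundary_single, Finset.sum_insert hu, Finset.erase_insert hu,
      colonLcm_insert, faceSign_insert_self, faceSign_mul_self, sub_eq_add_neg,
      ← Finset.sum_neg_distrib]
    refine congrArg₂ (· + ·) rfl (Finset.sum_congr rfl fun t ht => ?_)
    rw [Finset.erase_insert_of_ne (ne_of_mem_of_not_mem ht hu).symm, colonLcm_insert,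
      if_neg (fun h => hu (Finset.mem_of_mem_erase h)), faceSign_mul_faceSign_insert hu ht]
    split_ifs <;> simp

theorem uncone_boundary (g : ι → M) (b : M) (u : ι) (z : Finset ι →₀ K) :
    uncone u (boundary g b z) = -boundary g (b ⊔ g u) (uncone u z) := by
  classical
  refine LinearMap.congr_fun (f := uncone u ∘ₗ boundary g b)
    (g := -(boundary (K := K) g (b ⊔ g u) ∘ₗ uncone u)) (linearMap_ext_single fun T => ?_) z
  simp only [LinearMap.comp_apply, LinearMap.neg_apply, uncone_single, boundary_single, one_mul,
    map_sum, apply_ite (uncone u), map_zero]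
  by_cases hu : u ∈ T
  · obtain ⟨T, huT, rfl⟩ : ∃ T', u ∉ T' ∧ insert u T' = T :=
      ⟨T.erase u, Finset.notMem_erase u T, Finset.insert_erase hu⟩
    rw [if_pos hu, Finset.erase_insert huT, boundary_single, Finset.sum_insert huT,
      Finset.erase_insert huT, if_neg huT, ite_self, zero_add, ← Finset.sum_neg_distrib]
    refine Finset.sum_congr rfl fun t ht => ?_
    rw [Finset.erase_insert_of_ne (ne_of_mem_of_not_mem ht huT).symm, colonLcm_insert,
      colonLcm_insert, if_pos (Finset.mem_insert_self _ _),
      Finset.erase_insert fun h => huT (Finset.mem_of_mem_erase h), faceSign_insert_self,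
      faceSign_insert_self, faceSign_insert_mul_faceSign huT ht]
    split_ifs <;> simp
  · rw [if_neg hu, map_zero, neg_zero]
    refine Finset.sum_eq_zero fun t _ => ?_
    rw [if_neg fun h => hu (Finset.mem_of_mem_erase h), ite_self]

theorem boundary_changeBase (g : ι → M) {b b' : M} (hb : b ≤ b') (z : Finset ι →₀ K) :
    boundary g b (changeBase g b b' z) = changeBase g b b' (boundary g b' z) := by
  classical
  refine LinearMap.congr_fun (f := boundary g b ∘ₗ changeBase g b b')
    (g := changeBase g b b' ∘ₗ boundary g b') (linearMap_ext_single fun T => ?_) z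
  simp only [LinearMap.comp_apply, boundary_single, changeBase_single, one_mul, map_sum,
    apply_ite (boundary g b), apply_ite (changeBase g b b'), map_zero]
  have hT := colonLcm_mono_left g hb T
  have hface (t : ι) : colonLcm g b' (T.erase t) ≤ colonLcm g b' T :=
    colonLcm_mono_right g b' (T.erase_subset t)
  have hface' (t : ι) : colonLcm g b (T.erase t) ≤ colonLcm g b T :=
    colonLcm_mono_right g b (T.erase_subset t)
  have hcompare (t : ι) := colonLcm_mono_left g hb (T.erase t)
  split_ifs with h
  · refine Finset.sum_congr rfl fun t _ => ?_
    grind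
  · refine (Finset.sum_eq_zero fun t _ => ?_).symm
    have : colonLcm g b (T.erase t) ≠ colonLcm g b' T := fun h' =>
      h (le_antisymm hT (h' ▸ hface' t))
    split_ifs <;> grind

theorem uncone_eq_zero {u : ι} {z : Finset ι →₀ K} (hz : z ∈ supported K K {T | u ∉ T}) :
    uncone u z = 0 := by
  have := map_mem_supported (t := ∅) (uncone u)
    (fun T (hT : u ∉ T) => by rw [uncone_single, if_neg hT]; exact zero_mem _) hz
  rwa [Finsupp.supported_empty, Submodule.mem_bot] at this

/-- If `I` is generated by the `g t`, `t ∈ A`, this says `reg (S / (I : b)) + deg b ≤ c`, as a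
vanishing statement for the homology of the complex over the base `b`. -/
def RegLE (K : Type*) [Field K] (g : ι → M) (deg : M → ℕ) (A : Set ι) (b : M) (c : ℕ) : Prop :=
  ∀ (i : ℤ) (j : ℕ), i + c < j → LinearMap.ker (boundary g b) ⊓ piece K g deg A b i j ≤
    (piece K g deg A b (i + 1) j).map (boundary g b)

variable {g : ι → M} {deg : M → ℕ} {A B : Set ι} {b : M} {c : ℕ} {u : ι} {i : ℤ} {j : ℕ}
  {z : Finset ι →₀ K}

theorem cone_mem_piece (hz : z ∈ piece K g deg A (b ⊔ g u) i j) :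
    cone u z ∈ piece K g deg (insert u A) b (i + 1) j := by
  refine map_mem_supported _ (fun T hT => ?_) hz
  rw [cone_single]
  split_ifs with hu
  · exact zero_mem _
  · refine single_mem_supported _ _ ⟨?_, ?_, ?_⟩
    · rw [Finset.coe_insert]
      exact Set.insert_subset_insert hT.1
    · rw [Finset.card_insert_of_notMem hu, Nat.cast_succ, hT.2.1]
    · rw [colonLcm_insert, hT.2.2]

theorem uncone_mem_piece (hz : z ∈ piece K g deg (insert u A) b i j) :
    uncone u z ∈ piece K g deg A (b ⊔ g u) (i - 1) j := by
  refine map_mem_supported _ (fun T hT => ?_) hz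
  rw [uncone_single]
  split_ifs with hu
  · refine single_mem_supported _ _ ⟨?_, ?_, ?_⟩
    · rw [Finset.coe_erase, Set.sdiff_singleton_subset_iff]
      exact hT.1
    · rw [← hT.2.1, Finset.cast_card_erase_of_mem hu]
    · rw [colonLcm_erase g b hu, hT.2.2]
  · exact zero_mem _

theorem sub_cone_uncone_mem_piece (hz : z ∈ piece K g deg (insert u A) b i j) :
    z - cone u (uncone u z) ∈ piece K g deg A b i j := by
  refine map_mem_supported (LinearMap.id - cone u ∘ₗ uncone u) (fun T hT => ?_) hz
  rw [LinearMap.sub_apply, LinearMap.comp_apply, LinearMap.id_apply, uncone_single]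
  split_ifs with hu
  · rw [cone_single, if_neg (Finset.notMem_erase u T), Finset.insert_erase hu, one_mul,
      faceSign_erase_self, faceSign_mul_self, sub_self]
    exact zero_mem _
  · rw [map_zero, sub_zero]
    exact single_mem_supported _ _ ⟨(Set.subset_insert_iff_of_notMem hu).1 hT.1, hT.2⟩

theorem uncone_eq_zero_of_mem_piece (hu : u ∉ A) (hz : z ∈ piece K g deg A b i j) :
    uncone u z = 0 :=
  have hle : piece K g deg A b i j ≤ supported K K {T | u ∉ T} :=
    supported_mono fun _ hT huT => hu (hT.1 huT)
  uncone_eq_zero (hle hz)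

namespace RegLE

theorem insert (h : RegLE K g deg A b c) (hu : RegLE K g deg A (b ⊔ g u) (c + 1)) :
    RegLE K g deg (insert u A) b c := by
  rintro i j hij z ⟨hz, hzA⟩
  rw [SetLike.mem_coe, LinearMap.mem_ker] at hz
  obtain ⟨w₁, hw₁, hw₁z⟩ := hu (i - 1) j (by push_cast; omega)
    ⟨by rw [SetLike.mem_coe, LinearMap.mem_ker, ← neg_eq_zero, ← uncone_boundary, hz, map_zero],
      uncone_mem_piece hzA⟩
  rw [SetLike.mem_coe, sub_add_cancel] at hw₁
  obtain ⟨w₀, hw₀, hw₀z⟩ := h i j hij (x := z - cone u (uncone u z) + changeBase g b (b ⊔ g u) w₁)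
    ⟨by
      rw [SetLike.mem_coe, LinearMap.mem_ker, map_add, map_sub, boundary_cone,
        boundary_changeBase g le_sup_left, hw₁z, ← neg_eq_iff_eq_neg.2 (uncone_boundary g b u z)]
      simp [hz],
      add_mem (sub_cone_uncone_mem_piece hzA) (changeBase_mem_piece hw₁)⟩
  refine ⟨w₀ - cone u w₁, sub_mem (piece_mono (Set.subset_insert u A) hw₀) (cone_mem_piece hw₁), ?_⟩
  rw [map_sub, hw₀z, boundary_cone, hw₁z]
  abel

theorem of_insert (h : RegLE K g deg (Insert.insert u A) b c)
    (hu : RegLE K g deg A (b ⊔ g u) c) : RegLE K g deg A b c := by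
  by_cases huA : u ∈ A
  · rwa [Set.insert_eq_of_mem huA] at h
  rintro i j hij z ⟨hz, hzA⟩
  obtain ⟨w, hw, rfl⟩ := h i j hij ⟨hz, piece_mono (Set.subset_insert u A) hzA⟩
  have hw₁ : boundary g (b ⊔ g u) (uncone u w) = 0 := by
    rw [← neg_eq_zero, ← uncone_boundary, uncone_eq_zero_of_mem_piece huA hzA]
  have hw₁A := uncone_mem_piece hw
  rw [add_sub_cancel_right] at hw₁A
  obtain ⟨v, hv, hvw⟩ := hu i j hij ⟨hw₁, hw₁A⟩
  refine ⟨w - cone u (uncone u w) + changeBase g b (b ⊔ g u) v,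
    add_mem (sub_cone_uncone_mem_piece hw) (changeBase_mem_piece hv), ?_⟩
  rw [map_add, map_sub, boundary_cone, boundary_changeBase g le_sup_left, hvw, hw₁, map_zero]
  abel

theorem of_le (hu : u ∈ A) (h : g u ≤ b) : RegLE K g deg A b c := by
  rintro i j - z ⟨hz, hzA⟩
  have hb : b ⊔ g u = b := sup_eq_left.2 h
  have hcone := cone_mem_piece (u := u) (hb.symm ▸ hzA)
  rw [Set.insert_eq_of_mem hu] at hcone
  refine ⟨cone u z, hcone, ?_⟩
  rw [SetLike.mem_coe, LinearMap.mem_ker] at hz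
  rw [boundary_cone, hb, hz, changeBase_self, map_zero, sub_zero]

theorem empty (h : deg b ≤ c) : RegLE K g deg ∅ b c := by
  rintro i j hij z ⟨-, hz⟩
  have hpiece : {T : Finset ι | ↑T ⊆ (∅ : Set ι) ∧ (T.card : ℤ) = i ∧
      deg (colonLcm g b T) = j} = ∅ := by
    refine Set.eq_empty_of_forall_notMem ?_
    rintro T ⟨hT, rfl, rfl⟩
    obtain rfl : T = ∅ := by simpa using hT
    simp only [Finset.card_empty, Nat.cast_zero, zero_add, Nat.cast_lt, colonLcm,
      Finset.sup_empty, sup_bot_eq] at hij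
    exact absurd h hij.not_ge
  rw [SetLike.mem_coe, piece, hpiece, Finsupp.supported_empty, Submodule.mem_bot] at hz
  exact hz ▸ zero_mem _

theorem union_iff (hB : B.Finite) (h : ∀ u ∈ B, ∃ a ∈ A, g a ≤ b ⊔ g u) :
    RegLE K g deg (A ∪ B) b c ↔ RegLE K g deg A b c := by
  induction B, hB using Set.Finite.induction_on with
  | empty => rw [Set.union_empty]
  | @insert u B _ _ ih =>
    rw [← ih fun v hv => h v (Set.mem_insert_of_mem u hv), Set.union_insert]
    obtain ⟨a, ha, hau⟩ := h u (Set.mem_insert u B)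
    have haAB : a ∈ A ∪ B := Set.mem_union_left B ha
    exact ⟨fun h => h.of_insert (of_le haAB hau), fun h => h.insert (of_le haAB hau)⟩

theorem congr (hA : A.Finite) (hB : B.Finite) (hAB : ∀ u ∈ A, ∃ v ∈ B, g v ≤ b ⊔ g u)
    (hBA : ∀ u ∈ B, ∃ v ∈ A, g v ≤ b ⊔ g u) (h : RegLE K g deg A b c) : RegLE K g deg B b c := by
  rwa [← union_iff hA hAB, Set.union_comm, union_iff hB hBA]

end RegLE

section Transport

variable {κ N : Type*} [LinearOrder κ] [SemilatticeSup N] [OrderBot N] {g' : κ → N} {deg' : N → ℕ}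
  (f : ι ↪o κ) (φ : SupBotHom M N)

theorem colonLcm_map (hg : ∀ x, g' (f x) = φ (g x)) (b : M) (T : Finset ι) :
    colonLcm g' (φ b) (T.map f.toEmbedding) = φ (colonLcm g b T) := by
  rw [colonLcm, colonLcm, Finset.sup_map, map_sup, map_finset_sup]
  exact congrArg _ (Finset.sup_congr rfl fun x _ => hg x)

theorem faceSign_map (t : ι) (T : Finset ι) :
    faceSign K (f t) (T.map f.toEmbedding) = faceSign K t T := by
  simp [faceSign, Finset.filter_map]

theorem boundary_mapDomain (hφ : Function.Injective φ) (hg : ∀ x, g' (f x) = φ (g x)) (b : M)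
    (z : Finset ι →₀ K) :
    boundary g' (φ b) (mapDomain (Finset.map f.toEmbedding) z) =
      mapDomain (Finset.map f.toEmbedding) (boundary g b z) := by
  classical
  refine LinearMap.congr_fun (f := boundary g' (φ b) ∘ₗ lmapDomain K K (Finset.map f.toEmbedding))
    (g := lmapDomain K K (Finset.map f.toEmbedding) ∘ₗ boundary g b)
    (linearMap_ext_single fun T => ?_) z
  simp only [LinearMap.comp_apply, lmapDomain_apply, mapDomain_single, boundary_single,
    mapDomain_finsetSum, Finset.sum_map, RelEmbedding.coe_toEmbedding]
  refine Finset.sum_congr rfl fun t _ => ?_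
  have herase : (T.map f.toEmbedding).erase (f t) = (T.erase t).map f.toEmbedding :=
    (Finset.map_erase f.toEmbedding T t).symm
  simp only [herase, colonLcm_map f φ hg, hφ.eq_iff, faceSign_map]
  split_ifs
  · rw [mapDomain_single]
  · rw [mapDomain_zero]

theorem piece_image (hg : ∀ x, g' (f x) = φ (g x)) (hdeg : ∀ m, deg' (φ m) = deg m) :
    piece K g' deg' (f '' A) (φ b) i j =
      (piece K g deg A b i j).map (lmapDomain K K (Finset.map f.toEmbedding)) := by
  rw [piece, piece, lmapDomain_supported]
  congr 1
  ext T
  constructor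
  · rintro ⟨hT, hcard, hj⟩
    obtain ⟨T, hTA, rfl⟩ : ∃ T₀ : Finset ι, ↑T₀ ⊆ A ∧ T₀.map f.toEmbedding = T := by
      simpa only [Finset.map_eq_image, RelEmbedding.coe_toEmbedding]
        using Finset.subset_set_image_iff.1 hT
    refine ⟨T, ⟨hTA, by rwa [Finset.card_map] at hcard, ?_⟩, rfl⟩
    rwa [← hdeg, ← colonLcm_map f φ hg]
  · rintro ⟨T, ⟨hT, hcard, hj⟩, rfl⟩
    refine ⟨?_, ?_, ?_⟩
    · rw [Finset.coe_map]
      exact Set.image_mono hT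
    · rw [Finset.card_map, hcard]
    · rw [colonLcm_map f φ hg, hdeg, hj]

theorem regLE_image (hφ : Function.Injective φ) (hg : ∀ x, g' (f x) = φ (g x))
    (hdeg : ∀ m, deg' (φ m) = deg m) :
    RegLE K g' deg' (f '' A) (φ b) c ↔ RegLE K g deg A b c := by
  have hF : Function.Injective (lmapDomain K K (Finset.map f.toEmbedding)) :=
    mapDomain_injective (Finset.map_injective _)
  have hcomp : boundary g' (φ b) ∘ₗ lmapDomain K K (Finset.map f.toEmbedding) =
      lmapDomain K K (Finset.map f.toEmbedding) ∘ₗ boundary g b :=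
    LinearMap.ext (boundary_mapDomain f φ hφ hg b)
  have hker : (LinearMap.ker (boundary g' (φ b))).comap (lmapDomain K K (Finset.map f.toEmbedding))
      = LinearMap.ker (boundary g b) := by
    rw [← LinearMap.ker_comp, hcomp, LinearMap.ker_comp_of_ker_eq_bot _ (LinearMap.ker_eq_bot.2 hF)]
  refine forall₃_congr fun i j _ => ?_
  rw [piece_image f φ hg hdeg, piece_image f φ hg hdeg, ← Submodule.map_comp, hcomp,
    Submodule.map_comp, inf_comm, Submodule.map_inf_eq_map_inf_comap, hker, inf_comm,
    Submodule.map_le_map_iff_of_injective hF]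

end Transport

theorem RegLE.of_generates {κ : Type*} [LinearOrder κ] {g' : κ → M} {B : Set κ} (hA : A.Finite)
    (hB : B.Finite) (hAB : ∀ u ∈ A, ∃ v ∈ B, g' v ≤ b ⊔ g u)
    (hBA : ∀ v ∈ B, ∃ u ∈ A, g u ≤ b ⊔ g' v) (h : RegLE K g deg A b c) : RegLE K g' deg B b c := by
  let inl : ι ↪o ι ⊕ₗ κ := .ofMapLEIff (toLex ∘ Sum.inl) fun _ _ => Sum.Lex.inl_le_inl_iff
  let inr : κ ↪o ι ⊕ₗ κ := .ofMapLEIff (toLex ∘ Sum.inr) fun _ _ => Sum.Lex.inr_le_inr_iff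
  let g'' : ι ⊕ₗ κ → M := Sum.elim g g' ∘ ofLex
  have hinl : RegLE K g'' deg (inl '' A) b c :=
    (regLE_image inl (SupBotHom.id M) Function.injective_id (fun _ => rfl) fun _ => rfl).2 h
  refine (regLE_image inr (SupBotHom.id M) Function.injective_id (fun _ => rfl) fun _ => rfl).1
    (hinl.congr (hA.image inl) (hB.image inr) ?_ ?_)
  · rintro _ ⟨u, hu, rfl⟩
    obtain ⟨v, hv, hvu⟩ := hAB u hu
    exact ⟨inr v, Set.mem_image_of_mem inr hv, hvu⟩
  · rintro _ ⟨v, hv, rfl⟩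
    obtain ⟨u, hu, huv⟩ := hBA v hv
    exact ⟨inl u, Set.mem_image_of_mem inl hu, huv⟩

end Complex

section Squarefree

variable {V K : Type*} [Fintype V] [DecidableEq V] [Field K]

/-- `RegLE` for the ideal generated by the squarefree monomials with supports in `S`, over the
squarefree base monomial with support `b`. The auxiliary ordering of `Finset V` is arbitrary, by
`RegLE.of_generates`. -/
def SqfreeRegLE (K : Type*) [Field K] (S : Set (Finset V)) (b : Finset V) (c : ℕ) : Prop :=
  RegLE K (Fintype.equivFin (Finset V)).symm Finset.card (Fintype.equivFin (Finset V) '' S) b c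

/-- The supports of the variables indexed by `X`. -/
def vertexSets (X : Set V) : Set (Finset V) := singleton '' X

/-- The edges of `H` with both ends in `W`, as supports of the generators of an edge ideal. -/
def edgeSets (H : SimpleGraph V) (W : Set V) : Set (Finset V) :=
  {s | ∃ p ∈ W, ∃ q ∈ W, H.Adj p q ∧ s = {p, q}}

variable {S S' E : Set (Finset V)} {b u : Finset V} {c : ℕ}

namespace SqfreeRegLE

theorem congr (hS : ∀ s ∈ S, ∃ t ∈ S', t ⊆ b ∪ s) (hS' : ∀ s ∈ S', ∃ t ∈ S, t ⊆ b ∪ s)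
    (h : SqfreeRegLE K S b c) : SqfreeRegLE K S' b c := by
  refine RegLE.congr (Set.toFinite _) (Set.toFinite _) ?_ ?_ h <;>
    simpa only [Set.forall_mem_image, Set.exists_mem_image, Equiv.symm_apply_apply]

theorem insert (h : SqfreeRegLE K S b c) (hu : SqfreeRegLE K S (b ∪ u) (c + 1)) :
    SqfreeRegLE K (insert u S) b c := by
  rw [SqfreeRegLE, Set.image_insert_eq]
  refine RegLE.insert h ?_
  rwa [Equiv.symm_apply_apply]

theorem of_insert (h : SqfreeRegLE K (Insert.insert u S) b c) (hu : SqfreeRegLE K S (b ∪ u) c) :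
    SqfreeRegLE K S b c := by
  rw [SqfreeRegLE, Set.image_insert_eq] at h
  refine RegLE.of_insert h ?_
  rwa [Equiv.symm_apply_apply]

theorem empty (h : b.card ≤ c) : SqfreeRegLE K ∅ b c := by
  rw [SqfreeRegLE, Set.image_empty]
  exact RegLE.empty h

theorem of_union (h : SqfreeRegLE K (S ∪ E) b c)
    (hE : ∀ e ∈ E, ∀ F ⊆ E, SqfreeRegLE K (S ∪ F) (b ∪ e) c) : SqfreeRegLE K S b c := by
  induction E, E.toFinite using Set.Finite.induction_on with
  | empty => rwa [Set.union_empty] at h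
  | @insert e F _ _ ih =>
    rw [Set.union_insert] at h
    refine ih (h.of_insert (hE e (Set.mem_insert e F) F (Set.subset_insert e F))) ?_
    exact fun e' he' F' hF' => hE e' (Set.mem_insert_of_mem e he') F'
      (hF'.trans (Set.subset_insert e F))

theorem vertexSets (X : Set V) (h : b.card ≤ c) : SqfreeRegLE K (vertexSets X) b c := by
  induction X, X.toFinite using Set.Finite.induction_on generalizing b c with
  | empty =>
    rw [ColonTaylor.vertexSets, Set.image_empty]
    exact empty h
  | @insert v X _ _ ih =>
    rw [ColonTaylor.vertexSets, Set.image_insert_eq]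
    refine (ih h).insert (ih ((Finset.card_union_le b {v}).trans ?_))
    rw [Finset.card_singleton]
    exact Nat.succ_le_succ h

variable {H : SimpleGraph V} {X W : Set V}

theorem vertexSets_union_edgeSets {k : V} (hk : k ∈ W)
    (hdel : SqfreeRegLE K (ColonTaylor.vertexSets (Insert.insert k X) ∪ edgeSets H (W \ {k})) b c)
    (hlink : SqfreeRegLE K (ColonTaylor.vertexSets (X ∪ {v ∈ W | H.Adj k v}) ∪
      edgeSets H {v ∈ W | v ≠ k ∧ ¬ H.Adj k v}) (b ∪ {k}) c) :
    SqfreeRegLE K (ColonTaylor.vertexSets X ∪ edgeSets H W) b c := by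
  refine of_insert (u := {k}) (congr ?_ ?_ hdel) (congr ?_ ?_ hlink)
  · rintro s (⟨v, rfl | hv, rfl⟩ | ⟨p, hp, q, hq, hpq, rfl⟩)
    · exact ⟨{v}, .inl rfl, Finset.subset_union_right⟩
    · exact ⟨{v}, .inr (.inl ⟨v, hv, rfl⟩), Finset.subset_union_right⟩
    · exact ⟨{p, q}, .inr (.inr ⟨p, hp.1, q, hq.1, hpq, rfl⟩), Finset.subset_union_right⟩
  · have hk' : {k} ∈ ColonTaylor.vertexSets (Insert.insert k X) ∪ edgeSets H (W \ {k}) :=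
      .inl ⟨k, .inl rfl, rfl⟩
    rintro s (rfl | ⟨v, hv, rfl⟩ | ⟨p, hp, q, hq, hpq, rfl⟩)
    · exact ⟨{k}, hk', Finset.subset_union_right⟩
    · exact ⟨{v}, .inl ⟨v, .inr hv, rfl⟩, Finset.subset_union_right⟩
    · by_cases hpk : p = k
      · exact ⟨{k}, hk', by simp [hpk]⟩
      by_cases hqk : q = k
      · exact ⟨{k}, hk', by simp [hqk]⟩
      exact ⟨{p, q}, .inr ⟨p, ⟨hp, hpk⟩, q, ⟨hq, hqk⟩, hpq, rfl⟩, Finset.subset_union_right⟩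
  · rintro s (⟨v, hv | ⟨hv, hkv⟩, rfl⟩ | ⟨p, hp, q, hq, hpq, rfl⟩)
    · exact ⟨{v}, .inl ⟨v, hv, rfl⟩, Finset.subset_union_right⟩
    · exact ⟨{k, v}, .inr ⟨k, hk, v, hv, hkv, rfl⟩, by grind⟩
    · exact ⟨{p, q}, .inr ⟨p, hp.1, q, hq.1, hpq, rfl⟩, Finset.subset_union_right⟩
  · rintro s (⟨v, hv, rfl⟩ | ⟨p, hp, q, hq, hpq, rfl⟩)
    · exact ⟨{v}, .inl ⟨v, .inl hv, rfl⟩, Finset.subset_union_right⟩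
    · by_cases hkp : H.Adj k p
      · exact ⟨{p}, .inl ⟨p, .inr ⟨hp, hkp⟩, rfl⟩, by simp⟩
      by_cases hkq : H.Adj k q
      · exact ⟨{q}, .inl ⟨q, .inr ⟨hq, hkq⟩, rfl⟩, by simp⟩
      have hpk : p ≠ k := fun h => hkq (h ▸ hpq)
      have hqk : q ≠ k := fun h => hkp (h ▸ hpq.symm)
      exact ⟨{p, q}, .inr ⟨p, ⟨hp, hpk, hkp⟩, q, ⟨hq, hqk, hkq⟩, hpq, rfl⟩,
        Finset.subset_union_right⟩

theorem vertexSets_union_edgeSets_of_no_edge (hW : ∀ p ∈ W, ∀ q ∈ W, ¬ H.Adj p q)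
    (hb : b.card ≤ c) : SqfreeRegLE K (ColonTaylor.vertexSets X ∪ edgeSets H W) b c := by
  have hE : edgeSets H W = ∅ := Set.eq_empty_of_forall_notMem fun _ ⟨p, hp, q, hq, hpq, _⟩ =>
    hW p hp q hq hpq
  rw [hE, Set.union_empty]
  exact vertexSets X hb

theorem vertexSets_union_edgeSets_of_exists_cover (hb : b.card + 1 ≤ c)
    (hW : ∀ W' ⊆ W, W'.Nonempty →
      ∃ k ∈ W', ∀ p ∈ W', ∀ q ∈ W', H.Adj p q → H.Adj k p ∨ H.Adj k q) :
    SqfreeRegLE K (ColonTaylor.vertexSets X ∪ edgeSets H W) b c := by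
  induction W using WellFoundedLT.induction generalizing X with
  | ind W ih =>
  rcases W.eq_empty_or_nonempty with rfl | hne
  · exact vertexSets_union_edgeSets_of_no_edge (fun _ h => h.elim) (Nat.le_of_succ_le hb)
  obtain ⟨k, hk, hcover⟩ := hW W subset_rfl hne
  refine vertexSets_union_edgeSets hk
    (ih _ (Set.sdiff_singleton_ssubset.2 hk) fun W' hW' => hW W' (hW'.trans Set.sdiff_subset))
    (vertexSets_union_edgeSets_of_no_edge (fun p hp q hq hpq => ?_) ?_)
  · exact (hcover p hp.1 q hq.1 hpq).elim hp.2.2 hq.2.2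
  · exact (Finset.card_union_le b {k}).trans (by rwa [Finset.card_singleton])

end SqfreeRegLE

end Squarefree

section Taylor

variable {V K : Type*} [Field K] {k : ℕ} {gens : Fin k → V →₀ ℕ} {c d i j : ℕ}

theorem colonLcm_bot (gens : Fin k → V →₀ ℕ) (T : Finset (Fin k)) :
    colonLcm gens ⊥ T = taylorLcm gens T :=
  bot_sup_eq _

theorem taylorDiff_eq_boundary (gens : Fin k → V →₀ ℕ) :
    taylorDiff (K := K) gens = boundary gens ⊥ :=
  linearMap_ext_single fun T => by
    classical
    simp only [taylorDiff, lsum_single, LinearMap.toSpanSingleton_apply, taylorBoundary,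
      boundary_single, faceSign, smul_single_one, one_smul, one_mul]
    exact Finset.sum_congr rfl fun t _ => if_congr (by simp only [colonLcm_bot]) rfl rfl

theorem taylorPiece_eq_piece (gens : Fin k → V →₀ ℕ) (i j : ℕ) :
    taylorPiece (K := K) gens i j = piece K gens monomialDegree Set.univ ⊥ i j := by
  rw [piece, supported_eq_span_single, taylorPiece]
  congr 1
  ext f
  simp [colonLcm_bot, and_assoc, eq_comm]

theorem not_taylorHomologyNonzero (h : RegLE K gens monomialDegree Set.univ ⊥ c)
    (hij : i + c < j) : ¬ taylorHomologyNonzero (K := K) gens i j := by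
  rw [taylorHomologyNonzero, not_not, taylorDiff_eq_boundary, taylorPiece_eq_piece,
    taylorPiece_eq_piece]
  exact h i j (by exact_mod_cast hij)

theorem monomialDegree_lt_of_lt {m m' : V →₀ ℕ} (h : m < m') :
    monomialDegree m < monomialDegree m' :=
  sum_id_lt_of_lt m m' h

theorem taylorHomologyNonzero_one (hinj : Function.Injective gens)
    (hdeg : ∀ i, monomialDegree (gens i) = d) (hd : d ≠ 0) (i : Fin k) :
    taylorHomologyNonzero (K := K) gens 1 d := by
  rw [taylorHomologyNonzero, taylorDiff_eq_boundary, taylorPiece_eq_piece, taylorPiece_eq_piece]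
  intro hle
  have hne : gens i ≠ ⊥ := fun h => hd (by rw [← hdeg i, h]; rfl)
  have hcycle : single {i} (1 : K) ∈ LinearMap.ker (boundary gens ⊥) := by
    rw [LinearMap.mem_ker, boundary_single]
    simp [colonLcm, hne.symm]
  have hpiece : single {i} (1 : K) ∈ piece K gens monomialDegree Set.univ ⊥ (1 : ℕ) d :=
    single_mem_supported K 1 (by simp [colonLcm, hdeg])
  obtain ⟨w, hw, hwi⟩ := hle ⟨hcycle, hpiece⟩
  -- Distinct generators of degree `d` have an lcm of larger degree.
  have hempty : {T : Finset (Fin k) | (T : Set (Fin k)) ⊆ Set.univ ∧ (T.card : ℤ) = (1 + 1 : ℕ) ∧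
      monomialDegree (colonLcm gens ⊥ T) = d} = ∅ := by
    refine Set.eq_empty_of_forall_notMem fun T ⟨_, hcard, hTd⟩ => ?_
    obtain ⟨x, y, hxy, rfl⟩ := Finset.card_eq_two.1 (Nat.cast_injective hcard)
    have hlcm (z : Fin k) (hz : z ∈ ({x, y} : Finset (Fin k))) :
        gens z = colonLcm gens ⊥ {x, y} := by
      have hle : gens z ≤ colonLcm gens ⊥ {x, y} := (Finset.le_sup hz).trans le_sup_right
      refine hle.eq_of_not_lt fun hlt => ?_
      exact (monomialDegree_lt_of_lt hlt).ne ((hdeg z).trans hTd.symm)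
    exact hxy (hinj ((hlcm x (by simp)).trans (hlcm y (by simp)).symm))
  rw [SetLike.mem_coe, piece, hempty, Finsupp.supported_empty, Submodule.mem_bot] at hw
  rw [hw, map_zero] at hwi
  exact single_ne_zero.2 one_ne_zero hwi.symm

end Taylor

section SquarefreeIdeal

variable {V K : Type*} [Field K] {k : ℕ} {gens : Fin k → V →₀ ℕ}

theorem monomialSpan_eq_span_image (gens : Fin k → V →₀ ℕ) :
    monomialSpan (K := K) gens = Ideal.span ((fun m => monomial m 1) '' Set.range gens) := by
  rw [← Set.range_comp]
  rfl

theorem exists_le_of_monomial_mem_span {A : Set (V →₀ ℕ)} {m : V →₀ ℕ}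
    (h : monomial m (1 : K) ∈ Ideal.span ((fun m => monomial m 1) '' A)) : ∃ a ∈ A, a ≤ m :=
  mem_ideal_span_monomial_image.1 h m (by classical simp [coeff_monomial])

variable [DecidableEq V]

/-- The exponent vector of the squarefree monomial with a given support. -/
noncomputable def squarefreeExponent : SupBotHom (Finset V) (V →₀ ℕ) where
  toFun s := s.val.toFinsupp
  map_sup' s t := by rw [Finset.sup_eq_union, Finset.union_val, Multiset.toFinsupp_union]
  map_bot' := Multiset.toFinsupp_zero

theorem squarefreeExponent_apply (s : Finset V) : squarefreeExponent s = s.val.toFinsupp := rfl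

theorem squarefreeExponent_injective : Function.Injective (squarefreeExponent (V := V)) :=
  Multiset.toFinsupp.injective.comp Finset.val_injective

theorem monomialDegree_squarefreeExponent (s : Finset V) :
    monomialDegree (squarefreeExponent s) = s.card :=
  Multiset.toFinsupp_sum_eq s.val

/-- The ideal generated by the squarefree monomials with supports in `S`. -/
noncomputable def squarefreeIdeal (K : Type*) [Field K] (S : Set (Finset V)) :
    Ideal (MvPolynomial V K) :=
  Ideal.span ((fun m => monomial m 1) '' (squarefreeExponent '' S))

variable {S : Set (Finset V)} {c : ℕ}

theorem idealTorNonzero_squarefreeIdeal (hfin : S.Finite) (hS : S.Nonempty)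
    (hcard : ∀ s ∈ S, s.card = c) (hc : c ≠ 0) : IdealTorNonzero (squarefreeIdeal K S) 0 c := by
  have := hfin.to_subtype
  let e := Finite.equivFin S
  obtain ⟨s, hs⟩ := hS
  refine ⟨Nat.card S, fun i => squarefreeExponent (e.symm i : Finset V), ?_, ?_⟩
  · have hrange : Set.range (fun i => squarefreeExponent (e.symm i : Finset V)) =
        squarefreeExponent '' S :=
      (e.symm.surjective.range_comp fun s : S => squarefreeExponent (s : Finset V)).trans
        (Set.image_eq_range _ S).symm
    rw [monomialSpan_eq_span_image, hrange, squarefreeIdeal]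
  · refine taylorHomologyNonzero_one ?_ (fun i => ?_) hc (e ⟨s, hs⟩)
    · exact squarefreeExponent_injective.comp (Subtype.val_injective.comp e.symm.injective)
    · rw [monomialDegree_squarefreeExponent, hcard _ (e.symm i).2]

variable [Fintype V]

theorem SqfreeRegLE.regLE_of_eq_monomialSpan (h : SqfreeRegLE K S ∅ c)
    (hgens : squarefreeIdeal K S = monomialSpan gens) :
    RegLE K gens monomialDegree Set.univ ⊥ c := by
  have hsqfree : RegLE K (squarefreeExponent ∘ (Fintype.equivFin (Finset V)).symm) monomialDegree
      (Fintype.equivFin (Finset V) '' S) ⊥ c := by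
    have hrefl (x : Fin (Fintype.card (Finset V))) :
        (squarefreeExponent ∘ (Fintype.equivFin (Finset V)).symm) (RelEmbedding.refl (· ≤ ·) x) =
          squarefreeExponent ((Fintype.equivFin (Finset V)).symm x) := rfl
    rw [SqfreeRegLE, ← regLE_image _ squarefreeExponent squarefreeExponent_injective hrefl
      monomialDegree_squarefreeExponent] at h
    rw [← Finset.bot_eq_empty, map_bot] at h
    simpa only [RelEmbedding.refl_apply, Set.image_id'] using h
  refine hsqfree.of_generates (Set.toFinite _) Set.finite_univ ?_ ?_
  · rintro _ ⟨s, hs, rfl⟩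
    have hmem : monomial (squarefreeExponent s) (1 : K) ∈ squarefreeIdeal K S :=
      Ideal.subset_span (Set.mem_image_of_mem _ (Set.mem_image_of_mem _ hs))
    rw [hgens, monomialSpan_eq_span_image] at hmem
    obtain ⟨_, ⟨i, rfl⟩, hi⟩ := exists_le_of_monomial_mem_span hmem
    exact ⟨i, trivial, by simpa using hi⟩
  · rintro i -
    have hmem : monomial (gens i) (1 : K) ∈ monomialSpan gens :=
      Ideal.subset_span (Set.mem_range_self i)
    rw [← hgens, squarefreeIdeal] at hmem
    obtain ⟨_, ⟨s, hs, rfl⟩, hi⟩ := exists_le_of_monomial_mem_span hmem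
    exact ⟨_, ⟨s, hs, rfl⟩, by simpa using hi⟩

theorem SqfreeRegLE.reg_squarefreeIdeal (h : SqfreeRegLE K S ∅ c) (hS : S.Nonempty)
    (hcard : ∀ s ∈ S, s.card = c + 1) : reg (squarefreeIdeal K S) = c + 1 := by
  refine IsGreatest.csSup_eq ⟨⟨0, c + 1, ?_, rfl⟩, ?_⟩
  · exact idealTorNonzero_squarefreeIdeal S.toFinite hS hcard c.succ_ne_zero
  · rintro _ ⟨i, j, ⟨k, gens, hgens, htor⟩, rfl⟩
    by_contra hlt
    exact not_taylorHomologyNonzero (h.regLE_of_eq_monomialSpan hgens) (by lia) htor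

end SquarefreeIdeal

end ColonTaylor

namespace FourPath

open ColonTaylor

section Cover

variable {V : Type*} {G : SimpleGraph V} {a b : V} {W : Set V}

/-- For an edge `ab` of `G` and vertices `c ≠ d` other than `a` and `b`, the pair `cd` is an edge of
this graph exactly when `{a, b, c, d}` is a union of two disjoint edges of `G`. If `G` is gap-free,
the edge ideal of its restriction to the vertices other than `a` and `b` is the colon of the 4-path
ideal by `x_a x_b`. -/
def edgeColonGraph (G : SimpleGraph V) (a b : V) : SimpleGraph V :=
  G ⊔ .fromRel fun c d => G.Adj a c ∧ G.Adj b d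

theorem edgeColonGraph_adj {c d : V} : (edgeColonGraph G a b).Adj c d ↔
    G.Adj c d ∨ c ≠ d ∧ (G.Adj a c ∧ G.Adj b d ∨ G.Adj a d ∧ G.Adj b c) :=
  Iff.rfl

theorem edgeColonGraph_comm (G : SimpleGraph V) (a b : V) :
    edgeColonGraph G a b = edgeColonGraph G b a := by
  ext c d
  simp only [edgeColonGraph_adj, and_comm, or_comm]

theorem isIndepSet_nonneighbors (hgap : G.GapFree) (hab : G.Adj a b) :
    G.IsIndepSet {v | ¬ G.Adj a v ∧ ¬ G.Adj b v} := by
  rintro x ⟨hax, hbx⟩ y ⟨hay, hby⟩ - hxy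
  rcases hgap a b x y hab hxy (fun h => hbx (h ▸ hab.symm)) (fun h => hby (h ▸ hab.symm))
    (fun h => hax (h ▸ hab)) (fun h => hay (h ▸ hab)) with h | h | h | h
  exacts [hax h, hay h, hbx h, hby h]

-- A vertex of `P` with the most neighbours in `D` works: a missed edge `xy` would give a
-- neighbour `d ∈ D` of `k` not adjacent to `x`, and then `xy` and `kd` would form a gap.
theorem exists_cover_of_isIndepSet [Finite V] (hgap : G.GapFree) {P D : Set V}
    (hD : G.IsIndepSet D) (hP : P.Nonempty) :
    ∃ k ∈ P, ∀ x ∈ P, ∀ y ∈ D, G.Adj x y → k = x ∨ G.Adj k x ∨ G.Adj k y := by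
  have hindep : ∀ x ∈ D, ∀ y ∈ D, ¬ G.Adj x y := fun x hx y hy h => hD hx hy h.ne h
  let N (k : V) : Set V := {d ∈ D | G.Adj k d}
  obtain ⟨k, hk, hmax⟩ := P.toFinite.exists_maximalFor (fun k => (N k).ncard) P hP
  refine ⟨k, hk, fun x hx y hy hxy => ?_⟩
  by_contra! ⟨hne, hkx, hky⟩
  have hN : ¬ N k ⊆ N x := fun hsub => by
    have heq : N k = N x := Set.eq_of_subset_of_ncard_le hsub
      (hmax hx (Set.ncard_le_ncard hsub))
    exact hky (heq.ge ⟨hy, hxy⟩ : y ∈ N k).2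
  obtain ⟨d, ⟨hd, hkd⟩, hdx⟩ := Set.not_subset.1 hN
  have hxd : ¬ G.Adj x d := fun h => hdx ⟨hd, h⟩
  rcases hgap x y k d hxy hkd hne.symm (fun h => hindep y hy d hd (h ▸ hxy.symm))
    (fun h => hindep y hy d hd (h ▸ hkd)) (fun h => hky (h ▸ hkd)) with h | h | h | h
  exacts [hkx h.symm, hxd h, hky h.symm, hindep y hy d hd h]

theorem exists_cover_of_exists_adj_left [Finite V] (hgap : G.GapFree) (hcricket : G.CricketFree)
    (hab : G.Adj a b) (hb : b ∉ W) (hne : ∃ k ∈ W, G.Adj a k ∧ ¬ G.Adj b k) :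
    ∃ k ∈ W, ∀ p ∈ W, ∀ q ∈ W, (edgeColonGraph G a b).Adj p q →
      (edgeColonGraph G a b).Adj k p ∨ (edgeColonGraph G a b).Adj k q := by
  obtain ⟨k, ⟨hk, hak, hbk⟩, hcover⟩ :=
    exists_cover_of_isIndepSet hgap (isIndepSet_nonneighbors hgap hab) (P := {k ∈ W | _}) hne
  refine ⟨k, hk, fun p hp q hq hpq => ?_⟩
  have hcolon {x : V} (hbx : G.Adj b x) : (edgeColonGraph G a b).Adj k x :=
    .inr ⟨fun h => hbk (h ▸ hbx), .inl ⟨hak, hbx⟩⟩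
  by_cases hbp : G.Adj b p
  · exact .inl (hcolon hbp)
  by_cases hbq : G.Adj b q
  · exact .inr (hcolon hbq)
  have hpq : G.Adj p q := by
    rw [edgeColonGraph_adj] at hpq
    tauto
  suffices h : k = p ∨ k = q ∨ G.Adj k p ∨ G.Adj k q by
    rcases h with rfl | rfl | h | h
    exacts [.inr (.inl hpq), .inl (.inl hpq.symm), .inl (.inl h), .inr (.inl h)]
  by_cases hap : G.Adj a p <;> by_cases haq : G.Adj a q
  · by_contra! ⟨hkp, hkq, hkp', hkq'⟩
    have hbW {x : V} (hx : x ∈ W) : b ≠ x := fun h => hb (h ▸ hx)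
    exact hcricket ⟨b, k, a, p, q, hbW hk, hab.ne', hbW hp, hbW hq, hak.ne', hkp, hkq, hap.ne,
      haq.ne, hpq.ne, hab.symm, hak.symm, hap, haq, hpq, hbk, hbp, hbq, hkp', hkq'⟩
  · have := hcover p ⟨hp, hap, hbp⟩ q ⟨haq, hbq⟩ hpq
    tauto
  · have := hcover q ⟨hq, haq, hbq⟩ p ⟨hap, hbp⟩ hpq.symm
    tauto
  · exact absurd hpq (isIndepSet_nonneighbors hgap hab ⟨hap, hbp⟩ ⟨haq, hbq⟩ hpq.ne)

theorem exists_cover [Finite V] (hgap : G.GapFree) (hcricket : G.CricketFree)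
    (hab : G.Adj a b) (ha : a ∉ W) (hb : b ∉ W) (hW : W.Nonempty) :
    ∃ k ∈ W, ∀ p ∈ W, ∀ q ∈ W, (edgeColonGraph G a b).Adj p q →
      (edgeColonGraph G a b).Adj k p ∨ (edgeColonGraph G a b).Adj k q := by
  by_cases hA : ∃ k ∈ W, G.Adj a k ∧ ¬ G.Adj b k
  · exact exists_cover_of_exists_adj_left hgap hcricket hab hb hA
  by_cases hB : ∃ k ∈ W, G.Adj b k ∧ ¬ G.Adj a k
  · rw [edgeColonGraph_comm]
    exact exists_cover_of_exists_adj_left hgap hcricket hab.symm ha hB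
  push Not at hA hB
  -- Every vertex of `W` is now adjacent to both of `a` and `b` or to neither.
  obtain ⟨k, hk, hcommon⟩ : ∃ k ∈ W, G.Adj a k ∨ ∀ v ∈ W, ¬ G.Adj a v := by
    by_cases h : ∃ k ∈ W, G.Adj a k
    · exact h.imp fun k hk => ⟨hk.1, .inl hk.2⟩
    · push Not at h
      exact hW.imp fun k hk => ⟨hk, .inr h⟩
  refine ⟨k, hk, fun p hp q hq hpq => ?_⟩
  by_cases hkpq : k = p ∨ k = q
  · rcases hkpq with rfl | rfl
    exacts [.inr hpq, .inl hpq.symm]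
  have hindep : ¬ G.Adj a p → ¬ G.Adj a q → ¬ (edgeColonGraph G a b).Adj p q := by
    rintro hap haq (h | ⟨-, h | h⟩)
    · exact isIndepSet_nonneighbors hgap hab ⟨hap, mt (hB p hp) hap⟩ ⟨haq, mt (hB q hq) haq⟩ h.ne h
    · exact hap h.1
    · exact haq h.1
  grind [edgeColonGraph_adj]

end Cover

section MatchingSets

variable {V : Type*} [DecidableEq V] {G : SimpleGraph V} {a b c d : V} {s : Finset V}

/-- The vertex sets of the pairs of disjoint edges of `G`. For gap-free `G` these are the supports
of the generators of the 4-path ideal. -/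
def matchingSets (G : SimpleGraph V) : Set (Finset V) :=
  {s | ∃ p q r t, G.Adj p q ∧ G.Adj r t ∧ p ≠ r ∧ p ≠ t ∧ q ≠ r ∧ q ≠ t ∧ s = {p, q, r, t}}

theorem card_of_mem_matchingSets (hs : s ∈ matchingSets G) : s.card = 4 := by
  obtain ⟨p, q, r, t, hpq, hrt, hpr, hpt, hqr, hqt, rfl⟩ := hs
  exact Finset.card_eq_four.2 ⟨p, q, r, t, hpq.ne, hpr, hpt, hqr, hqt, hrt.ne, rfl⟩

theorem mem_matchingSets_of_adj_edgeColonGraph (hab : G.Adj a b) (hc : c ≠ a ∧ c ≠ b)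
    (hd : d ≠ a ∧ d ≠ b) (hcd : (edgeColonGraph G a b).Adj c d) :
    {a, b, c, d} ∈ matchingSets G := by
  rcases hcd with h | ⟨hne, ⟨hac, hbd⟩ | ⟨had, hbc⟩⟩
  · exact ⟨a, b, c, d, hab, h, hc.1.symm, hd.1.symm, hc.2.symm, hd.2.symm, rfl⟩
  · exact ⟨a, c, b, d, hac, hbd, hab.ne, hd.1.symm, hc.2, hne, by grind⟩
  · exact ⟨a, d, b, c, had, hbc, hab.ne, hc.1.symm, hd.2, hne.symm, by grind⟩

theorem exists_adj_edgeColonGraph (a b : V) (hs : s ∈ matchingSets G) :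
    ∃ c ∈ s, ∃ d ∈ s, (c ≠ a ∧ c ≠ b) ∧ (d ≠ a ∧ d ≠ b) ∧ (edgeColonGraph G a b).Adj c d := by
  obtain ⟨p, q, r, t, hpq, hrt, hpr, hpt, hqr, hqt, rfl⟩ := hs
  by_cases h₁ : (p ≠ a ∧ p ≠ b) ∧ q ≠ a ∧ q ≠ b
  · exact ⟨p, by simp, q, by simp, h₁.1, h₁.2, .inl hpq⟩
  by_cases h₂ : (r ≠ a ∧ r ≠ b) ∧ t ≠ a ∧ t ≠ b
  · exact ⟨r, by simp, t, by simp, h₂.1, h₂.2, .inl hrt⟩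
  -- Now each of the edges `pq` and `rt` contains exactly one of `a` and `b`.
  wlog hp : p = a ∨ p = b generalizing p q
  · rw [Finset.insert_comm]
    exact this q p hpq.symm hqr hqt hpr hpt (by tauto) (by tauto)
  wlog hr : r = a ∨ r = b generalizing r t
  · rw [Finset.pair_comm]
    exact this t r hrt.symm (by tauto) hpt hpr hqt hqr (by tauto)
  have hpq' := hpq.ne
  have hrt' := hrt.ne
  exact ⟨q, by simp, t, by simp, by grind, by grind, .inr ⟨hqt, by grind⟩⟩

end MatchingSets

section Regularity

variable {V : Type*} [Fintype V] [DecidableEq V] (K : Type*) [Field K] {G : SimpleGraph V}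
variable {a b : V}

theorem sqfreeRegLE_edgeSets (hgap : G.GapFree) (hcricket : G.CricketFree) (X W : Set V)
    {n : ℕ} (hn : 2 ≤ n) : SqfreeRegLE K (vertexSets X ∪ edgeSets G W) ∅ n := by
  induction W using WellFoundedLT.induction generalizing X with
  | ind W ih =>
  by_cases hW : ∃ k ∈ W, ∃ y ∈ W, G.Adj k y
  · obtain ⟨k, hk, y, -, hky⟩ := hW
    refine .vertexSets_union_edgeSets hk (ih _ (Set.sdiff_singleton_ssubset.2 hk) _)
      (.vertexSets_union_edgeSets_of_exists_cover (by simpa) fun W' hW' hne => ?_)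
    obtain ⟨l, hl, hcover⟩ := exists_cover hgap hcricket hky (fun h => (hW' h).2.1 rfl)
      (fun h => (hW' h).2.2 hky) hne
    have hadj : ∀ p ∈ W', ∀ q ∈ W', (edgeColonGraph G k y).Adj p q ↔ G.Adj p q := by
      intro p hp q hq
      have := (hW' hp).2.2
      have := (hW' hq).2.2
      rw [edgeColonGraph_adj]
      tauto
    refine ⟨l, hl, fun p hp q hq hpq => ?_⟩
    rw [← hadj l hl p hp, ← hadj l hl q hq]
    exact hcover p hp q hq (.inl hpq)
  · push Not at hW
    exact .vertexSets_union_edgeSets_of_no_edge hW (Nat.zero_le n)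

theorem sqfreeRegLE_matchingSets_union (hgap : G.GapFree) (hcricket : G.CricketFree)
    (hab : G.Adj a b) {F : Set (Finset V)} (hF : F ⊆ edgeSets G Set.univ) :
    SqfreeRegLE K (matchingSets G ∪ F) {a, b} 3 := by
  let X : Set V := {v | ∃ f ∈ F, f ⊆ {a, b, v}}
  let W : Set V := {v | v ≠ a ∧ v ≠ b}
  have hlin : SqfreeRegLE K (vertexSets X ∪ edgeSets (edgeColonGraph G a b) W) {a, b} 3 :=
    .vertexSets_union_edgeSets_of_exists_cover (Nat.succ_le_succ Finset.card_le_two)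
      fun W' hW' => exists_cover hgap hcricket hab (fun h => (hW' h).1 rfl)
        (fun h => (hW' h).2 rfl)
  refine .congr ?_ ?_ hlin
  · rintro s (⟨v, ⟨f, hf, hfs⟩, rfl⟩ | ⟨c, hc, d, hd, hcd, rfl⟩)
    · exact ⟨f, .inr hf, by grind⟩
    · exact ⟨_, .inl (mem_matchingSets_of_adj_edgeColonGraph hab hc hd hcd), by grind⟩
  · rintro s (hs | hs)
    · obtain ⟨c, hc, d, hd, hcW, hdW, hcd⟩ := exists_adj_edgeColonGraph a b hs
      exact ⟨{c, d}, .inr ⟨c, hcW, d, hdW, hcd, rfl⟩, by grind⟩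
    · obtain ⟨c, -, d, -, hcd, rfl⟩ := hF hs
      by_cases hc : c = a ∨ c = b
      · exact ⟨{d}, .inl ⟨d, ⟨_, hs, by grind⟩, rfl⟩, by grind⟩
      by_cases hd : d = a ∨ d = b
      · exact ⟨{c}, .inl ⟨c, ⟨_, hs, by grind⟩, rfl⟩, by grind⟩
      push Not at hc hd
      exact ⟨{c, d}, .inr ⟨c, hc, d, hd, .inl hcd, rfl⟩, by grind⟩

theorem sqfreeRegLE_matchingSets (hgap : G.GapFree) (hcricket : G.CricketFree) :
    SqfreeRegLE K (matchingSets G) ∅ 3 := by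
  refine .of_union (E := edgeSets G Set.univ) ?_ ?_
  · refine .congr (fun s hs => ⟨s, ?_, by simp⟩) ?_
      (sqfreeRegLE_edgeSets K hgap hcricket ∅ Set.univ (Nat.le_succ 2))
    · rw [vertexSets, Set.image_empty, Set.empty_union] at hs
      exact .inr hs
    · rintro s (⟨p, q, r, t, hpq, -, -, -, -, -, rfl⟩ | hs)
      · exact ⟨{p, q}, .inr ⟨p, trivial, q, trivial, hpq, rfl⟩, by grind⟩
      · exact ⟨s, .inr hs, by simp⟩
  · rintro _ ⟨a, -, b, -, hab, rfl⟩ F hF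
    rw [Finset.empty_union]
    exact sqfreeRegLE_matchingSets_union K hgap hcricket hab hF

end Regularity

section PathIdeal

variable {V : Type*} [DecidableEq V] {G : SimpleGraph V}

/-- The vertex sets of the paths on `t` vertices: the supports of the generators of the `t`-path
ideal. -/
def pathSets (G : SimpleGraph V) (t : ℕ) : Set (Finset V) :=
  {s | ∃ l : List V, G.IsPathList l ∧ l.length = t ∧ s = l.toFinset}

theorem prod_map_X_eq_monomial {K : Type*} [CommRing K] (l : List V) :
    (l.map X).prod = monomial (Multiset.toFinsupp l) (1 : K) := by
  induction l with
  | nil => simp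
  | cons v l ih =>
    rw [List.map_cons, List.prod_cons, ih, X, monomial_mul, one_mul, ← Multiset.cons_coe,
      ← Multiset.singleton_add, Multiset.toFinsupp_add, Multiset.toFinsupp_singleton]

theorem pathIdeal_eq_squarefreeIdeal (K : Type*) [Field K] (G : SimpleGraph V) (t : ℕ) :
    pathIdeal G t = squarefreeIdeal K (pathSets G t) := by
  have hmon {l : List V} (hl : l.Nodup) :
      (l.map X).prod = monomial (squarefreeExponent l.toFinset) (1 : K) := by
    rw [prod_map_X_eq_monomial, squarefreeExponent_apply, List.toFinset_val, hl.dedup]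
  rw [pathIdeal, squarefreeIdeal]
  congr 1
  ext f
  constructor
  · rintro ⟨l, hl, hlen, rfl⟩
    exact ⟨_, ⟨_, ⟨l, hl, hlen, rfl⟩, rfl⟩, (hmon hl.2).symm⟩
  · rintro ⟨_, ⟨_, ⟨l, hl, hlen, rfl⟩, rfl⟩, rfl⟩
    exact ⟨l, hl, hlen, (hmon hl.2).symm⟩

theorem pathSets_four (hgap : G.GapFree) : pathSets G 4 = matchingSets G := by
  refine Set.Subset.antisymm ?_ ?_
  · rintro _ ⟨l, ⟨hadj, hnodup⟩, hlen, rfl⟩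
    obtain ⟨p, q, r, t, rfl⟩ := List.length_eq_four.1 hlen
    replace hadj : List.IsChain G.Adj [p, q, r, t] := hadj
    obtain ⟨hpq, -, hrt⟩ : G.Adj p q ∧ G.Adj q r ∧ G.Adj r t := by simpa using hadj
    refine ⟨p, q, r, t, hpq, hrt, ?_, ?_, ?_, ?_, by simp⟩ <;> grind
  · have path {p q r t : V} (hpq : G.Adj p q) (hqr : G.Adj q r) (hrt : G.Adj r t) (hpr : p ≠ r)
        (hpt : p ≠ t) (hqt : q ≠ t) : {p, q, r, t} ∈ pathSets G 4 := by
      refine ⟨[p, q, r, t], ⟨?_, ?_⟩, rfl, by simp⟩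
      · exact List.isChain_cons_cons.2 ⟨hpq, by simp [hqr, hrt]⟩
      · simp [hpq.ne, hpr, hpt, hqr.ne, hqt, hrt.ne]
    rintro _ ⟨p, q, r, t, hpq, hrt, hpr, hpt, hqr, hqt, rfl⟩
    rcases hgap p q r t hpq hrt hpr hpt hqr hqt with h | h | h | h
    · rw [Finset.insert_comm]
      exact path hpq.symm h hrt hqr hqt hpt
    · rw [Finset.insert_comm, Finset.pair_comm]
      exact path hpq.symm h hrt.symm hqt hqr hpr
    · exact path hpq h hrt hpr hpt hqt
    · rw [Finset.pair_comm]
      exact path hpq h hrt.symm hpt hpr hqr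

end PathIdeal

end FourPath

/-- If `G` is gap-free and cricket-free with `I_4(G) ≠ 0`, then `I_4(G)`
has a linear minimal free resolution, i.e. `reg (I_4(G)) = 4`. -/
theorem stmt9 {V K : Type*} [Fintype V] [Field K] (G : SimpleGraph V)
    (hgap : G.GapFree) (hcricket : G.CricketFree)
    (h4 : pathIdeal (K := K) G 4 ≠ ⊥) :
    reg (pathIdeal (K := K) G 4) = 4 := by
  classical
  rw [FourPath.pathIdeal_eq_squarefreeIdeal, FourPath.pathSets_four hgap] at h4 ⊢
  have hne : (FourPath.matchingSets G).Nonempty := Set.nonempty_iff_ne_empty.2 fun h => h4 (by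
    rw [h, ColonTaylor.squarefreeIdeal, Set.image_empty, Set.image_empty, Ideal.span_empty])
  exact (FourPath.sqfreeRegLE_matchingSets K hgap hcricket).reg_squarefreeIdeal hne fun _ =>
    FourPath.card_of_mem_matchingSets
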